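/- Let F : ℝ^d → ℝ be Lipschitz continuous and let δ > 0. Then for every z ∈ ℝ^d, the two-point estimator is an unbiased estimator of the gradient of the δ-smoothed version F̃: E_u[(d/(2δ)) · (F(z + δu) − F(z − δu)) · u] = ∇F̃(z), where u is drawn uniformly at random from the Euclidean unit sphere S^{d−1} ⊂ ℝ^d. -/

import Mathlib

/-!
Put `f v = F (z + δ v)`, a Lipschitz function. By Rademacher's theorem and dominated convergence the
smoothed function is differentiable at `z`, with derivative `δ⁻¹` times the average of `fderiv ℝ f`
over the unit ball (`hasFDerivAt_smoothed`). It remains to turn `∫_B ∂_w f` into a sphere integral: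
`∫_B ∂_w f = ∫_S f(u) ⟪u, w⟫` (`integral_ball_lineDeriv`).

This divergence theorem for Lipschitz `f` is obtained by integrating by parts against the tent
`x ↦ max (t - ‖x‖) 0`, whose derivative along `-w` is `⟪x / ‖x‖, w⟫` inside the ball of radius `t`
and `0` outside. In polar coordinates this gives
`∫ ∂_w f(x) max (t - ‖x‖) 0 dx = ∫₀ᵗ r^(d-1) ∫_S f(r u) ⟪u, w⟫ dσ(u) dr`,
and differentiating both sides in `t` at `t = 1` yields the identity.

Applying it to `f` and to `v ↦ f (-v)` gives `∫_S (f(u) - f(-u)) ⟪u, w⟫ = 2 ∫_B ∂_w f`. Since the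
sphere has measure `d` times the volume of the ball, the factor `d / (2 δ)` matches the
normalisations on the two sides.
-/

open MeasureTheory

/-- The `δ`-smoothed version of `F : ℝ^d → ℝ`: `F̃ δ F x = 𝔼_{v ~ Unif(B^d)} [F (x + δ v)]`,
where `B^d` is the closed Euclidean unit ball. -/
noncomputable def smoothed {d : ℕ} (δ : ℝ) (F : EuclideanSpace ℝ (Fin d) → ℝ)
    (x : EuclideanSpace ℝ (Fin d)) : ℝ :=
  ∫ v, F (x + δ • v)
    ∂(ProbabilityTheory.cond volume (Metric.closedBall (0 : EuclideanSpace ℝ (Fin d)) 1))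

/-- The uniform probability measure on the Euclidean unit sphere `S^{d-1} ⊂ ℝ^d`,
obtained by normalizing the natural surface measure. -/
noncomputable def sphereUniform (d : ℕ) :
    Measure (Metric.sphere (0 : EuclideanSpace ℝ (Fin d)) 1) :=
  (((volume : Measure (EuclideanSpace ℝ (Fin d))).toSphere Set.univ)⁻¹ •
    (volume : Measure (EuclideanSpace ℝ (Fin d))).toSphere)

open Metric Set Filter Topology

/-! ### Tent functions `x ↦ max (t - ‖x‖) 0` -/

section Tent

variable {E : Type*} [NormedAddCommGroup E] [InnerProductSpace ℝ E]

theorem hasDerivAt_norm_line {x : E} (hx : x ≠ 0) (w : E) :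
    HasDerivAt (fun s : ℝ => ‖x + s • w‖) (inner ℝ (‖x‖⁻¹ • x) w) 0 := by
  have h1 : HasDerivAt (fun s : ℝ => x + s • w) w 0 := by
    simpa using ((hasDerivAt_id (0 : ℝ)).smul_const w).const_add x
  have h2 := h1.norm_sq.sqrt (by simpa using hx)
  simp only [Real.sqrt_sq (norm_nonneg _), zero_smul, add_zero] at h2
  convert h2 using 1
  rw [inner_smul_left]
  have : ‖x‖ ≠ 0 := norm_ne_zero_iff.2 hx
  simp
  field_simp

/-- The derivative of the tent function along `-w`, off the origin and the sphere of radius `t`: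
the cut-off radial field `x / ‖x‖` paired with `w`. -/
theorem lineDeriv_tent {x : E} (hx : x ≠ 0) {t : ℝ} (hxt : ‖x‖ ≠ t) (w : E) :
    lineDeriv ℝ (fun y : E => max (t - ‖y‖) 0) x (-w) =
      (ball (0 : E) t).indicator (fun y => inner ℝ (‖y‖⁻¹ • y) w) x := by
  have h1 := (hasDerivAt_norm_line hx (-w)).const_sub t
  have hc : Tendsto (fun s : ℝ => ‖x + s • (-w)‖) (𝓝 0) (𝓝 ‖x‖) := by
    have : Continuous fun s : ℝ => ‖x + s • (-w)‖ := by fun_prop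
    simpa using this.tendsto 0
  unfold lineDeriv
  rcases lt_or_gt_of_ne hxt with h | h
  · rw [indicator_of_mem (by simpa using h)]
    have : (fun s : ℝ => max (t - ‖x + s • (-w)‖) 0) =ᶠ[𝓝 0] fun s => t - ‖x + s • (-w)‖ := by
      filter_upwards [hc.eventually (gt_mem_nhds h)] with s hs
      exact max_eq_left (by linarith)
    rw [this.deriv_eq, h1.deriv]
    simp
  · rw [indicator_of_notMem (by simpa using h.le)]
    have : (fun s : ℝ => max (t - ‖x + s • (-w)‖) 0) =ᶠ[𝓝 0] fun s => (0 : ℝ) := by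
      filter_upwards [hc.eventually (lt_mem_nhds h)] with s hs
      exact max_eq_right (by linarith)
    rw [this.deriv_eq, deriv_const]

theorem lipschitzWith_tent {E : Type*} [SeminormedAddCommGroup E] (t : ℝ) :
    LipschitzWith 1 (fun y : E => max (t - ‖y‖) 0) := by
  apply LipschitzWith.of_dist_le_mul
  intro x y
  rw [Real.dist_eq, NNReal.coe_one, one_mul, dist_eq_norm]
  calc |max (t - ‖x‖) 0 - max (t - ‖y‖) 0| ≤ |(t - ‖x‖) - (t - ‖y‖)| :=
        abs_max_sub_max_le_abs _ _ _
    _ = |‖x‖ - ‖y‖| := by rw [← abs_neg]; congr 1; ring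
    _ ≤ _ := abs_norm_sub_norm_le x y

theorem hasCompactSupport_tent {E : Type*} [NormedAddCommGroup E] [ProperSpace E] (t : ℝ) :
    HasCompactSupport (fun y : E => max (t - ‖y‖) 0) := by
  apply HasCompactSupport.intro (isCompact_closedBall (0 : E) t)
  intro x hx
  simp at hx
  exact max_eq_right (by linarith)

end Tent

/-! ### The divergence theorem for Lipschitz functions on the unit ball -/

section Ball

variable {E : Type*} [NormedAddCommGroup E] [InnerProductSpace ℝ E] [FiniteDimensional ℝ E]
  [MeasurableSpace E] [BorelSpace E] (μ : Measure E) [μ.IsAddHaarMeasure]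

/-- Integration in polar coordinates. -/
theorem integral_eq_integral_Ioi_toSphere [Nontrivial E] {h : E → ℝ} (hh : Integrable h μ) :
    ∫ x, h x ∂μ = ∫ r in Ioi (0 : ℝ), r ^ (Module.finrank ℝ E - 1) *
      ∫ u : sphere (0 : E) 1, h (r • (u : E)) ∂μ.toSphere := by
  have mp := μ.measurePreserving_homeomorphUnitSphereProd
  have hemb := (homeomorphUnitSphereProd E).measurableEmbedding
  let k : sphere (0 : E) 1 × Ioi (0 : ℝ) → ℝ := fun p => h ((p.2 : ℝ) • (p.1 : E))
  have hk : ∀ x : ({(0 : E)}ᶜ : Set E), k (homeomorphUnitSphereProd E x) = h x := by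
    intro x
    have hx : ‖(x : E)‖ ≠ 0 := norm_ne_zero_iff.2 x.2
    simp [k, smul_smul, hx]
  have hint : Integrable k (μ.toSphere.prod (.volumeIoiPow (Module.finrank ℝ E - 1))) := by
    rw [← mp.integrable_comp_emb hemb]
    have : k ∘ homeomorphUnitSphereProd E = h ∘ Subtype.val := funext hk
    rw [this, ← integrableOn_iff_comap_subtypeVal (by measurability)]
    exact hh.integrableOn
  calc
    ∫ x, h x ∂μ = ∫ x : ({(0)}ᶜ : Set E), h x.1 ∂(μ.comap (↑)) := by
      rw [integral_subtype_comap (measurableSet_singleton _).compl h,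
        restrict_compl_singleton]
    _ = ∫ p, k p ∂μ.toSphere.prod (.volumeIoiPow (Module.finrank ℝ E - 1)) := by
      rw [← mp.integral_comp hemb]
      exact integral_congr_ae (.of_forall fun x => (hk x).symm)
    _ = ∫ r : Ioi (0 : ℝ), ∫ u : sphere (0 : E) 1, h ((r : ℝ) • (u : E)) ∂μ.toSphere
          ∂.volumeIoiPow (Module.finrank ℝ E - 1) := integral_prod_symm _ hint
    _ = _ := by
      simp only [Measure.volumeIoiPow, ENNReal.ofReal]
      rw [integral_withDensity_eq_integral_smul,
        integral_subtype_comap measurableSet_Ioi fun a : ℝ ↦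
          Real.toNNReal (a ^ (Module.finrank ℝ E - 1)) •
            ∫ u : sphere (0 : E) 1, h (a • (u : E)) ∂μ.toSphere,
        setIntegral_congr_fun measurableSet_Ioi fun x hx ↦ ?_]
      · rw [NNReal.smul_def, Real.coe_toNNReal _ (pow_nonneg hx.out.le _), smul_eq_mul]
      · exact (measurable_subtype_coe.pow_const _).real_toNNReal

theorem continuous_sphere_mean {f : E → ℝ} (hf : Continuous f) (w : E) :
    Continuous fun r : ℝ => ∫ u : sphere (0 : E) 1, f (r • (u : E)) * inner ℝ (u : E) w
      ∂μ.toSphere := by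
  have hc : Continuous (Function.uncurry fun (r : ℝ) (u : sphere (0 : E) 1) =>
      f (r • (u : E)) * inner ℝ (u : E) w) := by
    simp only [Function.uncurry_def]; fun_prop
  simpa using continuous_parametric_integral_of_continuous (μ := μ.toSphere) hc isCompact_univ

/-- Integration by parts against the tent function of height `t`, with the resulting integral over
the ball of radius `t` written in polar coordinates. -/
theorem integral_lineDeriv_mul_tent [Nontrivial E] {f : E → ℝ} {C : NNReal}
    (hf : LipschitzWith C f) (w : E) {t : ℝ} (ht : 0 < t) :
    ∫ x, lineDeriv ℝ f x w * max (t - ‖x‖) 0 ∂μ =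
      ∫ r in (0 : ℝ)..t, r ^ (Module.finrank ℝ E - 1) *
        ∫ u : sphere (0 : E) 1, f (r • (u : E)) * inner ℝ (u : E) w ∂μ.toSphere := by
  let k : E → ℝ := (ball (0 : E) t).indicator fun x => f x * inner ℝ (‖x‖⁻¹ • x) w
  have hk : Integrable k μ := by
    rw [integrable_indicator_iff measurableSet_ball]
    have h1 : IntegrableOn f (ball 0 t) μ :=
      (hf.continuous.continuousOn.integrableOn_compact
        (isCompact_closedBall (0 : E) t)).mono_set ball_subset_closedBall
    refine h1.mul_bdd (c := ‖w‖) ?_ (.of_forall fun x => ?_)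
    · have : Measurable fun x : E => inner ℝ (‖x‖⁻¹ • x) w := by fun_prop
      exact this.aestronglyMeasurable
    · refine (norm_inner_le_norm _ _).trans ?_
      refine mul_le_of_le_one_left (norm_nonneg _) ?_
      rw [norm_smul, norm_inv, norm_norm]
      exact inv_mul_le_one
  rw [LipschitzWith.integral_lineDeriv_mul_eq hf (lipschitzWith_tent t) (hasCompactSupport_tent t) w]
  have h0 : ∀ᵐ x ∂μ, x ≠ 0 := by
    simp [ae_iff]
  have h1 : ∀ᵐ x ∂μ, ‖x‖ ≠ t := by
    have := Measure.addHaar_sphere μ (0 : E) t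
    rw [ae_iff]
    convert this using 2
    ext; simp
  calc _ = ∫ x, k x ∂μ := by
        apply integral_congr_ae
        filter_upwards [h0, h1] with x hx0 hx1
        rw [lineDeriv_tent hx0 hx1]
        simp only [k, indicator]
        split_ifs <;> ring
    _ = _ := by
        rw [integral_eq_integral_Ioi_toSphere μ hk, intervalIntegral.integral_of_le ht.le,
          integral_Ioc_eq_integral_Ioo,
          setIntegral_eq_of_subset_of_forall_sdiff_eq_zero measurableSet_Ioi
            (Ioo_subset_Ioi_self : Ioo 0 t ⊆ Ioi (0 : ℝ))]
        · refine setIntegral_congr_fun measurableSet_Ioo fun r hr => ?_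
          simp only [mul_eq_mul_left_iff]
          left
          refine integral_congr_ae (.of_forall fun u => ?_)
          have hu : ‖(u : E)‖ = 1 := norm_eq_of_mem_sphere u
          have hru : ‖r • (u : E)‖ = r := by rw [norm_smul, hu, Real.norm_of_nonneg hr.1.le, mul_one]
          simp only [k]
          rw [indicator_of_mem (by simpa [hru] using hr.2), hru, smul_smul,
            inv_mul_cancel₀ hr.1.ne', one_smul]
        · intro r hr
          have hr0 : 0 < r := hr.1
          have htr : t ≤ r := by
            by_contra! h
            exact hr.2 ⟨hr0, h⟩
          rw [integral_eq_zero_of_ae (.of_forall fun u => ?_), mul_zero]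
          simp only [k, Pi.zero_apply]
          refine indicator_of_notMem ?_ _
          have hu : ‖(u : E)‖ = 1 := norm_eq_of_mem_sphere u
          simpa [norm_smul, hu, abs_of_pos hr0] using htr

/-- The divergence theorem on the unit ball for the field `f w`, `f` Lipschitz and `w` constant: it is
the derivative of `integral_lineDeriv_mul_tent` in the height, at height `1`. -/
theorem integral_ball_lineDeriv [Nontrivial E] {f : E → ℝ} {C : NNReal}
    (hf : LipschitzWith C f) (w : E) :
    ∫ x in ball 0 1, lineDeriv ℝ f x w ∂μ =
      ∫ u : sphere (0 : E) 1, f u * inner ℝ (u : E) w ∂μ.toSphere := by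
  have hm := aestronglyMeasurable_lineDeriv hf.continuous μ (v := w) (𝕜 := ℝ)
  have hb : ∀ x, ‖lineDeriv ℝ f x w‖ ≤ C * ‖w‖ := fun x => norm_lineDeriv_le_of_lipschitz ℝ hf
  have : IsFiniteMeasure (μ.restrict (ball (0 : E) 2)) := ⟨by simpa using measure_ball_lt_top⟩
  -- The tents of height `t < 2` are supported in `ball 0 2`, whose finite measure makes a constant
  -- bound integrable; `∂/∂t max (t - ‖x‖) 0` at `t = 1` is the indicator of `‖x‖ < 1` off the sphere.
  have hL : HasDerivAt (fun t : ℝ => ∫ x in ball (0 : E) 2, lineDeriv ℝ f x w * max (t - ‖x‖) 0 ∂μ)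
      (∫ x in ball (0 : E) 2, (ball (0 : E) 1).indicator (fun x => lineDeriv ℝ f x w) x ∂μ) 1 := by
    refine (hasDerivAt_integral_of_dominated_loc_of_lip (bound := fun _ => C * ‖w‖)
      (s := univ) univ_mem ?_ ?_ ?_ ?_ ?_ ?_).2
    · refine .of_forall fun t => (hm.mul ?_).restrict
      exact (lipschitzWith_tent t).continuous.aestronglyMeasurable
    · refine Integrable.bdd_mul (c := C * ‖w‖) ?_ hm.restrict (.of_forall hb)
      exact ((lipschitzWith_tent 1).continuous.integrable_of_hasCompactSupport
        (hasCompactSupport_tent 1)).integrableOn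
    · exact (hm.indicator measurableSet_ball).restrict
    · refine .of_forall fun x => LipschitzOnWith.of_dist_le_mul fun s _ t _ => ?_
      rw [Real.dist_eq, ← mul_sub, abs_mul, Real.coe_nnabs, Real.dist_eq]
      refine mul_le_mul ((hb x).trans (le_abs_self _)) ?_ (abs_nonneg _) (abs_nonneg _)
      refine (abs_max_sub_max_le_abs _ _ _).trans_eq ?_
      congr 1; ring
    · exact integrable_const _
    · refine ae_restrict_of_ae ?_
      have h1 : ∀ᵐ x ∂μ, ‖x‖ ≠ 1 := by
        have := Measure.addHaar_sphere μ (0 : E) 1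
        rw [ae_iff]
        convert this using 2
        ext; simp
      filter_upwards [h1] with x hx
      rcases lt_or_gt_of_ne hx with h | h
      · rw [indicator_of_mem (by simpa using h)]
        have : (fun t : ℝ => lineDeriv ℝ f x w * max (t - ‖x‖) 0) =ᶠ[𝓝 1]
            fun t => lineDeriv ℝ f x w * (t - ‖x‖) := by
          filter_upwards [lt_mem_nhds h] with t ht
          rw [max_eq_left (by linarith)]
        refine HasDerivAt.congr_of_eventuallyEq ?_ this
        simpa using ((hasDerivAt_id (1 : ℝ)).sub_const ‖x‖).const_mul (lineDeriv ℝ f x w)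
      · rw [indicator_of_notMem (by simpa using h.le)]
        have : (fun t : ℝ => lineDeriv ℝ f x w * max (t - ‖x‖) 0) =ᶠ[𝓝 1] fun t => 0 := by
          filter_upwards [gt_mem_nhds h] with t ht
          rw [max_eq_right (by linarith), mul_zero]
        exact (hasDerivAt_const _ _).congr_of_eventuallyEq this
  have hR : HasDerivAt (fun t : ℝ => ∫ r in (0 : ℝ)..t, r ^ (Module.finrank ℝ E - 1) *
        ∫ u : sphere (0 : E) 1, f (r • (u : E)) * inner ℝ (u : E) w ∂μ.toSphere)
      (∫ u : sphere (0 : E) 1, f u * inner ℝ (u : E) w ∂μ.toSphere) 1 := by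
    have hc := (continuous_pow (M := ℝ) (Module.finrank ℝ E - 1)).mul
      (continuous_sphere_mean μ hf.continuous w)
    simpa using hc.integral_hasStrictDerivAt 0 1 |>.hasDerivAt
  have hE : (fun t : ℝ => ∫ x in ball (0 : E) 2, lineDeriv ℝ f x w * max (t - ‖x‖) 0 ∂μ)
      =ᶠ[𝓝 1] (fun t : ℝ => ∫ r in (0 : ℝ)..t, r ^ (Module.finrank ℝ E - 1) *
        ∫ u : sphere (0 : E) 1, f (r • (u : E)) * inner ℝ (u : E) w ∂μ.toSphere) := by
    filter_upwards [Ioo_mem_nhds (zero_lt_one' ℝ) (show (1 : ℝ) < 2 by norm_num)] with t ht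
    rw [← integral_lineDeriv_mul_tent μ hf w ht.1]
    apply setIntegral_eq_integral_of_forall_compl_eq_zero
    intro x hx
    simp at hx
    rw [max_eq_right (by linarith [ht.2]), mul_zero]
  have := hL.unique (hR.congr_of_eventuallyEq hE)
  rw [← this, setIntegral_indicator measurableSet_ball,
    inter_eq_right.2 (ball_subset_ball one_le_two)]

/-- The divergence theorem for `x ↦ f x - f (-x)`. Reflection invariance is only needed for the
volume on the ball, not for the surface measure. -/
theorem integral_sphere_sub_neg [Nontrivial E] {f : E → ℝ} {C : NNReal}
    (hf : LipschitzWith C f) (w : E) :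
    ∫ u : sphere (0 : E) 1, (f u - f (-u)) * inner ℝ (u : E) w ∂μ.toSphere =
      2 * ∫ x in ball 0 1, lineDeriv ℝ f x w ∂μ := by
  have hn : LipschitzWith C fun x => f (-x) := by
    refine LipschitzWith.of_dist_le_mul fun x y => ?_
    simpa using hf.dist_le_mul (-x) (-y)
  have hd : ∀ x, lineDeriv ℝ (fun x => f (-x)) x w = -lineDeriv ℝ f (-x) w := by
    intro x
    rw [← lineDeriv_neg]
    simp only [lineDeriv, neg_add, smul_neg]
  have h2 := integral_ball_lineDeriv μ hn w
  simp only [hd, integral_neg] at h2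
  have h3 : ∫ x in ball 0 1, lineDeriv ℝ f (-x) w ∂μ = ∫ x in ball 0 1, lineDeriv ℝ f x w ∂μ := by
    rw [← integral_indicator measurableSet_ball, ← integral_indicator measurableSet_ball,
      ← integral_neg_eq_self]
    refine integral_congr_ae (.of_forall fun x => ?_)
    simp [indicator]
  simp only [sub_mul]
  have hcont := hf.continuous
  rw [integral_sub, ← h2, ← integral_ball_lineDeriv μ hf w, h3]
  · ring
  · exact Continuous.integrable_of_hasCompactSupport (by fun_prop) (.of_compactSpace _)
  · exact Continuous.integrable_of_hasCompactSupport (by fun_prop) (.of_compactSpace _)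

/-- The integral over the unit ball of the translate of a Lipschitz function by `y` is
differentiable at `y = 0`: by Rademacher's theorem the integrand is differentiable almost everywhere,
and its difference quotients are bounded. -/
theorem hasFDerivAt_integral_closedBall {f : E → ℝ} {C : NNReal} (hf : LipschitzWith C f) :
    Integrable (fderiv ℝ f) (μ.restrict (closedBall 0 1)) ∧
    HasFDerivAt (fun y => ∫ v in closedBall (0 : E) 1, f (v + y) ∂μ)
      (∫ v in closedBall (0 : E) 1, fderiv ℝ f v ∂μ) 0 := by
  have : IsFiniteMeasure (μ.restrict (closedBall (0 : E) 1)) :=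
    ⟨by simpa using (isCompact_closedBall (0 : E) 1).measure_lt_top⟩
  have hcont := hf.continuous
  refine hasFDerivAt_integral_of_dominated_loc_of_lip (F := fun y v => f (v + y))
    (bound := fun _ => (C : ℝ)) (s := univ) univ_mem ?_ ?_ ?_ ?_ ?_ ?_
  · refine .of_forall fun y => Continuous.aestronglyMeasurable (by fun_prop)
  · simpa [IntegrableOn] using hcont.continuousOn.integrableOn_compact (isCompact_closedBall (0 : E) 1)
  · exact (measurable_fderiv ℝ f).aestronglyMeasurable
  · refine .of_forall fun v => LipschitzOnWith.of_dist_le_mul fun y _ y' _ => ?_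
    simpa using hf.dist_le_mul (v + y) (v + y')
  · exact integrable_const _
  · refine ae_restrict_of_ae ?_
    filter_upwards [hf.ae_differentiableAt (μ := μ)] with v hv
    have h : HasFDerivAt f (fderiv ℝ f v) (v + 0) := by simpa using hv.hasFDerivAt
    simpa [Function.comp_def] using h.comp (0 : E) ((hasFDerivAt_id (0 : E)).const_add v)
end Ball

/-! ### The smoothed function and the estimator -/

/-- The derivative of the smoothed function at `z`, in the rescaled coordinate `x = z + δ v`; the
factor `δ⁻¹` undoes the rescaling. -/
theorem hasFDerivAt_smoothed {d : ℕ} {δ : ℝ} (hδ : 0 < δ) {F : EuclideanSpace ℝ (Fin d) → ℝ}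
    {C : NNReal} (z : EuclideanSpace ℝ (Fin d)) (hf : LipschitzWith C fun v => F (z + δ • v)) :
    HasFDerivAt (smoothed δ F)
      ((volume.real (closedBall (0 : EuclideanSpace ℝ (Fin d)) 1))⁻¹ • δ⁻¹ •
        ∫ v in closedBall (0 : EuclideanSpace ℝ (Fin d)) 1,
          fderiv ℝ (fun v => F (z + δ • v)) v) z := by
  have h1 := (hasFDerivAt_integral_closedBall volume hf).2
  have h2 : HasFDerivAt (fun x : EuclideanSpace ℝ (Fin d) => δ⁻¹ • (x - z))
      (δ⁻¹ • ContinuousLinearMap.id ℝ (EuclideanSpace ℝ (Fin d))) z :=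
    ((hasFDerivAt_id z).sub_const z).const_smul δ⁻¹
  have h3 := (HasFDerivAt.comp z (f := fun x : EuclideanSpace ℝ (Fin d) => δ⁻¹ • (x - z))
    (by rw [sub_self, smul_zero]; exact h1) h2).const_smul
    (volume.real (closedBall (0 : EuclideanSpace ℝ (Fin d)) 1))⁻¹
  have heq : smoothed δ F = (volume.real (closedBall (0 : EuclideanSpace ℝ (Fin d)) 1))⁻¹ •
      ((fun y => ∫ v in closedBall (0 : EuclideanSpace ℝ (Fin d)) 1, F (z + δ • (v + y))) ∘
        fun x : EuclideanSpace ℝ (Fin d) => δ⁻¹ • (x - z)) := by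
    ext x
    simp only [smoothed, ProbabilityTheory.cond, integral_smul_measure, Pi.smul_apply,
      Function.comp, ENNReal.toReal_inv, Measure.real]
    congr 3
    ext v
    congr 1
    rw [smul_add, smul_smul, mul_inv_cancel₀ hδ.ne', one_smul]
    abel
  rw [heq]
  refine h3.congr_fderiv ?_
  ext w; simp

theorem two_point_estimator_unbiased (d : ℕ) (δ : ℝ) (hδ : 0 < δ)
    (F : EuclideanSpace ℝ (Fin d) → ℝ) (G : ℝ)
    (hF : ∀ x y : EuclideanSpace ℝ (Fin d), |F x - F y| ≤ G * ‖x - y‖) :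
    ∀ z : EuclideanSpace ℝ (Fin d),
      (∫ u : Metric.sphere (0 : EuclideanSpace ℝ (Fin d)) 1,
          ((d : ℝ) / (2 * δ) *
            (F (z + δ • (u : EuclideanSpace ℝ (Fin d))) -
              F (z - δ • (u : EuclideanSpace ℝ (Fin d))))) •
            (u : EuclideanSpace ℝ (Fin d)) ∂(sphereUniform d))
        = gradient (smoothed δ F) z := by
  intro z
  rcases Nat.eq_zero_or_pos d with rfl | hd
  -- In dimension `0` both sides live in a trivial space.
  · exact Subsingleton.elim _ _
  have : NeZero d := ⟨hd.ne'⟩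
  set f : EuclideanSpace ℝ (Fin d) → ℝ := fun v => F (z + δ • v) with hfdef
  have hf : LipschitzWith (G.toNNReal * δ.toNNReal) f := by
    refine LipschitzWith.of_dist_le_mul fun x y => ?_
    rw [Real.dist_eq, NNReal.coe_mul, Real.coe_toNNReal _ hδ.le, mul_assoc, dist_eq_norm]
    have h := hF (z + δ • x) (z + δ • y)
    rw [add_sub_add_left_eq_sub, ← smul_sub, norm_smul, Real.norm_of_nonneg hδ.le] at h
    exact h.trans (mul_le_mul_of_nonneg_right (Real.le_coe_toNNReal G) (by positivity))
  have hcont := hf.continuous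
  refine ext_inner_left ℝ fun w => ?_
  have hB := (hasFDerivAt_integral_closedBall volume hf).1
  have hball : ball (0 : EuclideanSpace ℝ (Fin d)) 1 =ᵐ[volume] closedBall 0 1 :=
    ae_eq_of_subset_of_measure_ge ball_subset_closedBall
      (Measure.addHaar_unitClosedBall_eq_addHaar_unitBall volume).le
      measurableSet_ball.nullMeasurableSet measure_closedBall_lt_top.ne
  have hR : inner ℝ w (gradient (smoothed δ F) z) =
      (volume.real (ball (0 : EuclideanSpace ℝ (Fin d)) 1))⁻¹ * (δ⁻¹ *
        ∫ v in ball (0 : EuclideanSpace ℝ (Fin d)) 1, lineDeriv ℝ f v w) := by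
    rw [real_inner_comm, ← InnerProductSpace.toDual_apply_apply (𝕜 := ℝ), toDual_gradient,
      (hasFDerivAt_smoothed hδ z hf).fderiv]
    simp only [smul_apply, smul_eq_mul]
    rw [ContinuousLinearMap.integral_apply hB, ← setIntegral_congr_set hball,
      Measure.real, Measure.addHaar_unitClosedBall_eq_addHaar_unitBall, Measure.real]
    congr 2
    refine integral_congr_ae (ae_restrict_of_ae ?_)
    filter_upwards [hf.ae_differentiableAt (μ := volume)] with v hv
    exact hv.lineDeriv_eq_fderiv.symm
  have hint : Integrable (fun u : sphere (0 : EuclideanSpace ℝ (Fin d)) 1 =>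
      ((d : ℝ) / (2 * δ) * (f u - f (-u))) • (u : EuclideanSpace ℝ (Fin d)))
      (volume : Measure (EuclideanSpace ℝ (Fin d))).toSphere :=
    Continuous.integrable_of_hasCompactSupport (by fun_prop) (.of_compactSpace _)
  have hV : volume.real (ball (0 : EuclideanSpace ℝ (Fin d)) 1) ≠ 0 :=
    (ENNReal.toReal_pos (measure_ball_pos _ _ one_pos).ne' measure_ball_lt_top.ne).ne'
  have hd' : (d : ℝ) ≠ 0 := by exact_mod_cast hd.ne'
  have hL : ∀ u : EuclideanSpace ℝ (Fin d), F (z + δ • u) - F (z - δ • u) = f u - f (-u) := by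
    intro u; simp [f, sub_eq_add_neg]
  simp only [hL]
  rw [hR, sphereUniform, integral_smul_measure, inner_smul_right, ← integral_inner hint]
  have hI : ∀ u : sphere (0 : EuclideanSpace ℝ (Fin d)) 1,
      inner ℝ w (((d : ℝ) / (2 * δ) * (f u - f (-u))) • (u : EuclideanSpace ℝ (Fin d))) =
        (d : ℝ) / (2 * δ) * ((f u - f (-u)) * inner ℝ (u : EuclideanSpace ℝ (Fin d)) w) := by
    intro u
    rw [inner_smul_right, real_inner_comm, mul_assoc]
  simp only [hI]
  rw [integral_const_mul, integral_sphere_sub_neg volume hf w, ENNReal.toReal_inv,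
    ← Measure.real, Measure.toSphere_real_apply_univ, finrank_euclideanSpace_fin]
  field_simp
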